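/- arXiv:1805.08955 — 4 statements merged into one kernel-verified Lean document; each statement's English description precedes it below -/
import Mathlib

section
/- Let B be a D-left-regular bipartite graph with K left vertices and F right vertices, where D ≥ 1 and every right vertex has at least one neighbor. Then the line graph L = L(B) has KD vertices and satisfies: (C1) V(L) is partitioned into K pairwise disjoint cliques U_1, …, U_K of size D each (the clique U_k consisting of the edges of B incident to the k-th left vertex); (C2) for distinct k1, k2, every vertex of U_{k1} is adjacent in L to at most one vertex of U_{k2}; (C3) for every k and every vertex e ∈ U_k, the set {e} ∪ (N(e) \ U_k) is a clique of L (where N(e) is the neighborhood of e in L), and these sets (the subfile-cliques S_1, …, S_r) partition V(L); (C4) the number of right vertices satisfies F = KD − Σ_{i=1}^{r}(|S_i| − 1). -/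
open SimpleGraph

/-! The edges at a fixed vertex `v`, its star, form a clique of the line graph, and `U_k` is the
star of the `k`-th left vertex. In an arbitrary graph, if `e = vw` then the edges adjacent to `e`
but not incident to `v` are exactly the other edges at `w`, so `{e} ∪ (N(e) \ star v)` is the star
of `w`: the subfile-cliques are the stars of the right vertices. Since every edge has one left and
one right endpoint, the stars on either side partition the edge set, and (C4) compares the two
counts.
-/

open Function

section Partition

variable {ι α : Type*} [Fintype ι] [Finite α] {s : ι → Set α}

theorem sum_ncard_eq_card_of_partition (hdisj : Pairwise (Disjoint on s))
    (hcover : ⋃ i, s i = Set.univ) : ∑ i, (s i).ncard = Nat.card α := by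
  rw [← Set.ncard_univ, ← hcover, Set.ncard_iUnion_of_finite (fun _ => Set.toFinite _) hdisj,
    finsum_eq_sum_of_fintype]

theorem card_add_sum_ncard_sub_one_of_partition (hne : ∀ i, (s i).Nonempty)
    (hdisj : Pairwise (Disjoint on s)) (hcover : ⋃ i, s i = Set.univ) :
    Fintype.card ι + ∑ i, ((s i).ncard - 1) = Nat.card α := by
  have hpos (i : ι) : 0 < (s i).ncard := (Set.ncard_pos (Set.toFinite _)).2 (hne i)
  calc Fintype.card ι + ∑ i, ((s i).ncard - 1)
      = ∑ i, (1 + ((s i).ncard - 1)) := by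
        rw [Finset.sum_add_distrib, Fintype.card_eq_sum_ones]
    _ = ∑ i, (s i).ncard := Finset.sum_congr rfl fun i _ => Nat.add_sub_cancel' (hpos i)
    _ = Nat.card α := sum_ncard_eq_card_of_partition hdisj hcover

end Partition

section EdgeStar

variable {ι V : Type*} {G : SimpleGraph V} {v w : V}

/-- The star of `v`: the edges of `G` incident to `v`, as a set of vertices of the line graph. It is
`G.incidenceSet v`, but as a set in the subtype `G.edgeSet` instead of `Sym2 V`. -/
def edgeStar (G : SimpleGraph V) (v : V) : Set G.edgeSet :=
  {e | v ∈ (e : Sym2 V)}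

theorem mem_edgeStar {e : G.edgeSet} : e ∈ edgeStar G v ↔ v ∈ (e : Sym2 V) :=
  Iff.rfl

theorem exists_adj_of_mem_edgeStar {e : G.edgeSet} (he : e ∈ edgeStar G v) :
    ∃ w, G.Adj v w ∧ (e : Sym2 V) = s(v, w) := by
  obtain ⟨w, hw⟩ := Sym2.mem_iff_exists.1 he
  exact ⟨w, G.mem_edgeSet.1 (hw ▸ e.2), hw⟩

theorem edgeStar_inter_subsingleton (hvw : v ≠ w) : (edgeStar G v ∩ edgeStar G w).Subsingleton :=
  fun _ he _ hf => Subtype.ext <|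
    ((Sym2.mem_and_mem_iff hvw).1 he).trans ((Sym2.mem_and_mem_iff hvw).1 hf).symm

theorem disjoint_edgeStar (hne : v ≠ w) (hvw : ¬G.Adj v w) :
    Disjoint (edgeStar G v) (edgeStar G w) :=
  Set.disjoint_left.2 fun e hv hw => hvw (G.adj_of_mem_incidenceSet hne ⟨e.2, hv⟩ ⟨e.2, hw⟩)

theorem pairwise_disjoint_edgeStar {f : ι → V} (hf : Injective f)
    (hindep : ∀ i j, ¬G.Adj (f i) (f j)) : Pairwise (Disjoint on fun i => edgeStar G (f i)) :=
  fun i j hij => disjoint_edgeStar (hf.ne hij) (hindep i j)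

theorem iUnion_edgeStar {f : ι → V} (hf : G.IsVertexCover (Set.range f)) :
    ⋃ i, edgeStar G (f i) = Set.univ := by
  refine Set.eq_univ_of_forall fun ⟨e, he⟩ => Set.mem_iUnion.2 ?_
  induction e with
  | _ v w =>
    rcases hf he with ⟨i, rfl⟩ | ⟨i, rfl⟩
    · exact ⟨i, Sym2.mem_mk_left _ _⟩
    · exact ⟨i, Sym2.mem_mk_right _ _⟩

theorem edgeStar_nonempty_iff : (edgeStar G v).Nonempty ↔ (G.neighborSet v).Nonempty := by
  constructor
  · rintro ⟨e, he⟩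
    obtain ⟨w, hvw, -⟩ := exists_adj_of_mem_edgeStar he
    exact ⟨w, hvw⟩
  · rintro ⟨w, hvw⟩
    exact ⟨⟨s(v, w), hvw⟩, Sym2.mem_mk_left v w⟩

theorem ncard_edgeStar (G : SimpleGraph V) (v : V) :
    (edgeStar G v).ncard = (G.neighborSet v).ncard := by
  classical
  have himage : Subtype.val '' edgeStar G v = G.incidenceSet v := by
    ext e
    simp [edgeStar, incidenceSet, and_comm]
  rw [← Set.ncard_image_of_injective _ Subtype.val_injective, himage]
  exact Nat.card_congr (G.incidenceSetEquivNeighborSet v)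

theorem isClique_lineGraph_edgeStar (G : SimpleGraph V) (v : V) :
    G.lineGraph.IsClique (edgeStar G v) :=
  fun _ he _ hf hne => lineGraph_adj_iff_exists.2 ⟨hne, v, he, hf⟩

theorem lineGraph_adj_iff_of_eq_mk {e f : G.edgeSet} (he : (e : Sym2 V) = s(v, w)) :
    G.lineGraph.Adj e f ↔ e ≠ f ∧ (f ∈ edgeStar G v ∨ f ∈ edgeStar G w) := by
  simp [lineGraph_adj_iff_exists, he, mem_edgeStar]

theorem subsingleton_edgeStar_inter_lineGraph_neighborSet (hne : v ≠ w) (hvw : ¬G.Adj v w)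
    {e : G.edgeSet} (he : e ∈ edgeStar G v) :
    (edgeStar G w ∩ G.lineGraph.neighborSet e).Subsingleton := by
  obtain ⟨x, hvx, hex⟩ := exists_adj_of_mem_edgeStar he
  have hwx : w ≠ x := by
    rintro rfl
    exact hvw hvx
  refine (edgeStar_inter_subsingleton hwx).anti fun f ⟨hfw, hef⟩ => ⟨hfw, ?_⟩
  exact ((lineGraph_adj_iff_of_eq_mk hex).1 hef).2.resolve_left
    fun hfv => (disjoint_edgeStar hne hvw).notMem_of_mem_left hfv hfw

theorem insert_lineGraph_neighborSet_sdiff_edgeStar {e : G.edgeSet} (he : (e : Sym2 V) = s(v, w)) :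
    insert e (G.lineGraph.neighborSet e \ edgeStar G v) = edgeStar G w := by
  have hvw : v ≠ w := (G.mem_edgeSet.1 (he ▸ e.2)).ne
  have hev : e ∈ edgeStar G v := mem_edgeStar.2 (he ▸ Sym2.mem_mk_left v w)
  have hew : e ∈ edgeStar G w := mem_edgeStar.2 (he ▸ Sym2.mem_mk_right v w)
  ext f
  rw [Set.mem_insert_iff, Set.mem_sdiff, mem_neighborSet, lineGraph_adj_iff_of_eq_mk he]
  constructor
  · rintro (rfl | ⟨⟨-, hf⟩, hfv⟩)
    · exact hew
    · exact hf.resolve_left hfv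
  · intro hfw
    rw [or_iff_not_imp_left]
    exact fun hfe => ⟨⟨Ne.symm hfe, Or.inr hfw⟩,
      fun hfv => hfe (edgeStar_inter_subsingleton hvw ⟨hfv, hfw⟩ ⟨hev, hew⟩)⟩

theorem isClique_insert_lineGraph_neighborSet_sdiff_edgeStar {e : G.edgeSet}
    (he : e ∈ edgeStar G v) :
    G.lineGraph.IsClique (insert e (G.lineGraph.neighborSet e \ edgeStar G v)) := by
  obtain ⟨w, -, hew⟩ := exists_adj_of_mem_edgeStar he
  rw [insert_lineGraph_neighborSet_sdiff_edgeStar hew]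
  exact isClique_lineGraph_edgeStar G w

theorem setOf_insert_lineGraph_neighborSet_sdiff_edgeStar (G : SimpleGraph V) (f : ι → V) :
    {s | ∃ i, ∃ e ∈ edgeStar G (f i),
      s = insert e (G.lineGraph.neighborSet e \ edgeStar G (f i))} =
      edgeStar G '' ⋃ i, G.neighborSet (f i) := by
  ext s
  simp only [Set.mem_ofPred_eq, Set.mem_image, Set.mem_iUnion]
  constructor
  · rintro ⟨i, e, he, rfl⟩
    obtain ⟨w, hw, hew⟩ := exists_adj_of_mem_edgeStar he
    exact ⟨w, ⟨i, hw⟩, (insert_lineGraph_neighborSet_sdiff_edgeStar hew).symm⟩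
  · rintro ⟨w, ⟨i, hw⟩, rfl⟩
    exact ⟨i, ⟨s(f i, w), hw⟩, Sym2.mem_mk_left _ _,
      (insert_lineGraph_neighborSet_sdiff_edgeStar rfl).symm⟩

end EdgeStar

section Bipartite

variable {α β : Type*} {B : SimpleGraph (α ⊕ β)}

theorem isVertexCover_range_inl (hbipR : ∀ a b : β, ¬B.Adj (Sum.inr a) (Sum.inr b)) :
    B.IsVertexCover (Set.range Sum.inl) := by
  rintro (a | a) (b | b) hab
  · exact Or.inl ⟨a, rfl⟩
  · exact Or.inl ⟨a, rfl⟩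
  · exact Or.inr ⟨b, rfl⟩
  · exact absurd hab (hbipR a b)

theorem isVertexCover_range_inr (hbipL : ∀ a b : α, ¬B.Adj (Sum.inl a) (Sum.inl b)) :
    B.IsVertexCover (Set.range Sum.inr) := by
  rintro (a | a) (b | b) hab
  · exact absurd hab (hbipL a b)
  · exact Or.inr ⟨b, rfl⟩
  · exact Or.inl ⟨a, rfl⟩
  · exact Or.inl ⟨a, rfl⟩

theorem iUnion_neighborSet_inl (hbipL : ∀ a b : α, ¬B.Adj (Sum.inl a) (Sum.inl b))
    (hbipR : ∀ a b : β, ¬B.Adj (Sum.inr a) (Sum.inr b))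
    (hright : ∀ b : β, (B.neighborSet (Sum.inr b)).Nonempty) :
    ⋃ a : α, B.neighborSet (Sum.inl a) = Set.range Sum.inr := by
  refine Set.Subset.antisymm (Set.iUnion_subset fun a => ?_) ?_
  · rintro (a' | b) hab
    · exact absurd hab (hbipL a a')
    · exact ⟨b, rfl⟩
  · rintro _ ⟨b, rfl⟩
    obtain ⟨a | b', hab⟩ := hright b
    · exact Set.mem_iUnion.2 ⟨a, hab.symm⟩
    · exact absurd hab (hbipR b b')

theorem card_edgeSet_eq_sum_ncard_neighborSet_inl [Fintype α] [Finite β]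
    (hbipL : ∀ a b : α, ¬B.Adj (Sum.inl a) (Sum.inl b))
    (hbipR : ∀ a b : β, ¬B.Adj (Sum.inr a) (Sum.inr b)) :
    Nat.card B.edgeSet = ∑ a : α, (B.neighborSet (Sum.inl a)).ncard := by
  simp only [← ncard_edgeStar]
  exact (sum_ncard_eq_card_of_partition (pairwise_disjoint_edgeStar Sum.inl_injective hbipL)
    (iUnion_edgeStar (isVertexCover_range_inl hbipR))).symm

theorem lineGraph_of_bipartite_caching_graph_general [Fintype α] [Fintype β]
    (B : SimpleGraph (α ⊕ β))
    (hbipL : ∀ a b : α, ¬B.Adj (Sum.inl a) (Sum.inl b))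
    (hbipR : ∀ a b : β, ¬B.Adj (Sum.inr a) (Sum.inr b))
    (hright : ∀ b : β, (B.neighborSet (Sum.inr b)).Nonempty) :
    B.edgeSet.ncard = ∑ a : α, (B.neighborSet (Sum.inl a)).ncard ∧
    ((∀ a : α, B.lineGraph.IsClique (edgeStar B (Sum.inl a))) ∧
     (∀ a : α, (edgeStar B (Sum.inl a)).ncard = (B.neighborSet (Sum.inl a)).ncard) ∧
     (∀ a₁ a₂ : α, a₁ ≠ a₂ → Disjoint (edgeStar B (Sum.inl a₁)) (edgeStar B (Sum.inl a₂))) ∧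
     (⋃ a : α, edgeStar B (Sum.inl a)) = Set.univ) ∧
    (∀ a₁ a₂ : α, a₁ ≠ a₂ → ∀ e ∈ edgeStar B (Sum.inl a₁),
      {f : B.edgeSet | f ∈ edgeStar B (Sum.inl a₂) ∧ B.lineGraph.Adj e f}.Subsingleton) ∧
    (∀ a : α, ∀ e ∈ edgeStar B (Sum.inl a),
      B.lineGraph.IsClique (insert e (B.lineGraph.neighborSet e \ edgeStar B (Sum.inl a)))) ∧
    (∃ 𝒮 : Finset (Set B.edgeSet),
      (↑𝒮 : Set (Set B.edgeSet)) =
        {s : Set B.edgeSet | ∃ a : α, ∃ e ∈ edgeStar B (Sum.inl a),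
          s = insert e (B.lineGraph.neighborSet e \ edgeStar B (Sum.inl a))} ∧
      ((𝒮 : Set (Set B.edgeSet)).Pairwise fun s₁ s₂ => Disjoint s₁ s₂) ∧
      (⋃ s ∈ 𝒮, s) = Set.univ ∧
      Fintype.card β + ∑ s ∈ 𝒮, (s.ncard - 1) =
        ∑ a : α, (B.neighborSet (Sum.inl a)).ncard) := by
  classical
  have hcard := card_edgeSet_eq_sum_ncard_neighborSet_inl hbipL hbipR
  have hdisjL := pairwise_disjoint_edgeStar Sum.inl_injective hbipL
  have hdisjR := pairwise_disjoint_edgeStar Sum.inr_injective hbipR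
  have hcoverR := iUnion_edgeStar (isVertexCover_range_inr hbipL)
  refine ⟨hcard, ⟨fun a => isClique_lineGraph_edgeStar B _, fun a => ncard_edgeStar B _,
      fun _ _ hne => hdisjL hne, iUnion_edgeStar (isVertexCover_range_inl hbipR)⟩,
    fun a₁ a₂ hne e he => subsingleton_edgeStar_inter_lineGraph_neighborSet
      (Sum.inl_injective.ne hne) (hbipL a₁ a₂) he,
    fun a e he => isClique_insert_lineGraph_neighborSet_sdiff_edgeStar he,
    Finset.univ.image fun b => edgeStar B (Sum.inr b), ?_, ?_, ?_, ?_⟩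
  · rw [setOf_insert_lineGraph_neighborSet_sdiff_edgeStar,
      iUnion_neighborSet_inl hbipL hbipR hright, ← Set.range_comp, Finset.coe_image,
      Finset.coe_univ, Set.image_univ, comp_def]
  · rw [Finset.coe_image, Finset.coe_univ, Set.image_univ]
    exact hdisjR.range_pairwise
  · simpa using hcoverR
  · rw [Finset.sum_image_of_disjoint (by simp) (hdisjR.set_pairwise _), ← hcard]
    exact card_add_sum_ncard_sub_one_of_partition
      (fun b => edgeStar_nonempty_iff.2 (hright b)) hdisjR hcoverR

end Bipartite

/-- properties (C1)-(C4) of the line graph of a `D`-left-regular bipartite graph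
with `K` left vertices and `F` right vertices (every right vertex having at least one
neighbor). -/
theorem lineGraph_of_bipartite_caching_graph (K D F : ℕ) (hD : 1 ≤ D)
    (B : SimpleGraph (Fin K ⊕ Fin F))
    (hbipL : ∀ a b : Fin K, ¬ B.Adj (Sum.inl a) (Sum.inl b))
    (hbipR : ∀ a b : Fin F, ¬ B.Adj (Sum.inr a) (Sum.inr b))
    (hreg : ∀ k : Fin K, (B.neighborSet (Sum.inl k)).ncard = D)
    (hright : ∀ f : Fin F, (B.neighborSet (Sum.inr f)).Nonempty)
    (U : Fin K → Set B.edgeSet)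
    (hU : ∀ k : Fin K, U k = {e : B.edgeSet | (Sum.inl k : Fin K ⊕ Fin F) ∈ (e : Sym2 (Fin K ⊕ Fin F))}) :
    -- the line graph has K*D vertices
    B.edgeSet.ncard = K * D ∧
    -- (C1) : the U k are disjoint cliques of size D covering the vertex set of the line graph
    ((∀ k : Fin K, B.lineGraph.IsClique (U k)) ∧
     (∀ k : Fin K, (U k).ncard = D) ∧
     (∀ k₁ k₂ : Fin K, k₁ ≠ k₂ → Disjoint (U k₁) (U k₂)) ∧
     (⋃ k : Fin K, U k) = Set.univ) ∧
    -- (C2) : a vertex of U k₁ is adjacent to at most one vertex of U k₂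
    (∀ k₁ k₂ : Fin K, k₁ ≠ k₂ → ∀ e ∈ U k₁,
      {f : B.edgeSet | f ∈ U k₂ ∧ B.lineGraph.Adj e f}.Subsingleton) ∧
    -- (C3) : the subfile-cliques are cliques and partition the vertex set
    (∀ k : Fin K, ∀ e ∈ U k,
      B.lineGraph.IsClique (insert e (B.lineGraph.neighborSet e \ U k))) ∧
    (∃ 𝒮 : Finset (Set B.edgeSet),
      (↑𝒮 : Set (Set B.edgeSet)) =
        {s : Set B.edgeSet | ∃ k : Fin K, ∃ e ∈ U k,
          s = insert e (B.lineGraph.neighborSet e \ U k)} ∧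
      ((𝒮 : Set (Set B.edgeSet)).Pairwise fun s₁ s₂ => Disjoint s₁ s₂) ∧
      (⋃ s ∈ 𝒮, s) = Set.univ ∧
      -- (C4) : F = K*D - ∑ (|Sᵢ| - 1)
      F + ∑ s ∈ 𝒮, (s.ncard - 1) = K * D) := by
  obtain rfl : U = fun k => edgeStar B (Sum.inl k) := funext hU
  simpa only [hreg, Finset.sum_const, Finset.card_univ, Fintype.card_fin, smul_eq_mul] using
    lineGraph_of_bipartite_caching_graph_general B hbipL hbipR hright
end

section
/- Let K, D ≥ 1 and let L be a graph on KD vertices satisfying: (C1) V(L) is partitioned into K pairwise disjoint cliques U_1, …, U_K (user-cliques) of size D each; (C2) for distinct k1, k2, every vertex of U_{k1} is adjacent in L to at most one vertex of U_{k2}; (C3) for every k and every vertex e ∈ U_k, the set {e} ∪ (N(e) \ U_k) is a clique of L. Let S_1, …, S_r denote the subfile-cliques of L, i.e., the distinct sets of the form {e} ∪ (N(e) \ U_k) for e ∈ U_k (under (C1)–(C3) these partition V(L)). Then L is isomorphic to the line graph of a D-left-regular bipartite graph B with K left vertices and exactly F = KD − Σ_{i=1}^{r}(|S_i| − 1) right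 vertices, each right vertex having at least one neighbor. -/
open SimpleGraph

/-!
Record for each vertex `e` of `L` the index `u e` of its user-clique and its subfile-clique `S e`.
By (C2) and (C3), `f ∈ S e` iff `S e = S f`, so the subfile-cliques partition the vertices, and
a user-clique meets a subfile-clique in at most one vertex. Moreover, distinct `e` and `f` are
adjacent iff `u e = u f` or `S e = S f`. Hence `L` is the line graph of the bipartite graph with
one edge joining `u e` to `S e` for each `e`. Each `|S| - 1` is the excess of a subfile-clique over
a single vertex, so removing these excesses from the number of vertices counts the subfile-cliques.
-/

section BipartiteGraphOfEnds

variable {W α β : Type*} (u : W → α) (c : W → β)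

/-- The bipartite graph in which every `e : W` contributes an edge from the left vertex `u e` to the
right vertex `c e`. Elements of `W` with the same two ends contribute a single edge, so `W` is the
edge set only when `e ↦ (u e, c e)` is injective. -/
def bipartiteGraphOfEnds : SimpleGraph (α ⊕ β) :=
  fromEdgeSet (Set.range fun e => s(Sum.inl (u e), Sum.inr (c e)))

theorem bipartiteGraphOfEnds_adj_inl_inr (k : α) (b : β) :
    (bipartiteGraphOfEnds u c).Adj (Sum.inl k) (Sum.inr b) ↔ ∃ e, u e = k ∧ c e = b := by
  simp [bipartiteGraphOfEnds]

theorem bipartiteGraphOfEnds_not_adj_inl_inl (k k' : α) :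
    ¬ (bipartiteGraphOfEnds u c).Adj (Sum.inl k) (Sum.inl k') := by
  simp [bipartiteGraphOfEnds]

theorem bipartiteGraphOfEnds_not_adj_inr_inr (b b' : β) :
    ¬ (bipartiteGraphOfEnds u c).Adj (Sum.inr b) (Sum.inr b') := by
  simp [bipartiteGraphOfEnds]

theorem edgeSet_bipartiteGraphOfEnds :
    (bipartiteGraphOfEnds u c).edgeSet = Set.range fun e => s(Sum.inl (u e), Sum.inr (c e)) := by
  rw [bipartiteGraphOfEnds, edgeSet_fromEdgeSet, sdiff_eq_left, Set.disjoint_left]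
  rintro _ ⟨e, rfl⟩
  simp

theorem neighborSet_inl_bipartiteGraphOfEnds (k : α) :
    (bipartiteGraphOfEnds u c).neighborSet (Sum.inl k) = (Sum.inr ∘ c) '' (u ⁻¹' {k}) := by
  ext (k' | b)
  · simp [bipartiteGraphOfEnds_not_adj_inl_inl]
  · simp [bipartiteGraphOfEnds_adj_inl_inr]

variable {u c}

theorem ncard_neighborSet_inl_bipartiteGraphOfEnds
    (hinj : ∀ e f, u e = u f → c e = c f → e = f) (k : α) :
    ((bipartiteGraphOfEnds u c).neighborSet (Sum.inl k)).ncard = (u ⁻¹' {k}).ncard := by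
  rw [neighborSet_inl_bipartiteGraphOfEnds]
  refine Set.InjOn.ncard_image fun e he f hf h => ?_
  exact hinj e f (he.trans hf.symm) (Sum.inr_injective h)

theorem nonempty_neighborSet_inr_bipartiteGraphOfEnds (hc : Function.Surjective c) (b : β) :
    ((bipartiteGraphOfEnds u c).neighborSet (Sum.inr b)).Nonempty := by
  obtain ⟨e, rfl⟩ := hc b
  exact ⟨Sum.inl (u e), ((bipartiteGraphOfEnds_adj_inl_inr u c _ _).2 ⟨e, rfl, rfl⟩).symm⟩

theorem nonempty_iso_lineGraph_bipartiteGraphOfEnds {L : SimpleGraph W}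
    (hinj : ∀ e f, u e = u f → c e = c f → e = f)
    (hadj : ∀ e f, L.Adj e f ↔ e ≠ f ∧ (u e = u f ∨ c e = c f)) :
    Nonempty (L ≃g (bipartiteGraphOfEnds u c).lineGraph) := by
  have edge_injective :
      Function.Injective fun e => (s(Sum.inl (u e), Sum.inr (c e)) : Sym2 (α ⊕ β)) := by
    intro e f h
    have ends_eq : u e = u f ∧ c e = c f := by simpa using h
    exact hinj e f ends_eq.1 ends_eq.2
  let φ : W ≃ (bipartiteGraphOfEnds u c).edgeSet :=
    (Equiv.ofInjective _ edge_injective).trans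
      (Equiv.setCongr (edgeSet_bipartiteGraphOfEnds u c).symm)
  have coe_φ (e : W) : (φ e : Sym2 (α ⊕ β)) = s(Sum.inl (u e), Sum.inr (c e)) := rfl
  refine ⟨φ, fun {e f} => ?_⟩
  rw [lineGraph_adj_iff_exists, φ.injective.ne_iff, hadj]
  simp [coe_φ]

end BipartiteGraphOfEnds

section Partition

variable {W : Type*}

theorem isPartition_range_of_mem_iff_eq {S : W → Set W} (hS : ∀ e f, f ∈ S e ↔ S e = S f) :
    Setoid.IsPartition (Set.range S) := by
  have mem_self (e : W) : e ∈ S e := (hS e e).2 rfl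
  refine ⟨?_, fun e => ⟨S e, ⟨⟨e, rfl⟩, mem_self e⟩, ?_⟩⟩
  · rintro ⟨e, he⟩
    exact Set.notMem_empty e (he ▸ mem_self e)
  · rintro _ ⟨⟨f, rfl⟩, hef⟩
    exact (hS f e).1 hef

theorem card_eq_card_sub_sum_of_isPartition [Fintype W] {P : Finset (Set W)}
    (hP : Setoid.IsPartition (P : Set (Set W))) :
    P.card = Fintype.card W - ∑ s ∈ P, (s.ncard - 1) := by
  have card_eq_sum_ncard : Fintype.card W = ∑ s ∈ P, s.ncard := by
    rw [← Nat.card_eq_fintype_card, ← Set.ncard_univ, hP.ncard_eq_finsum Set.univ,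
      finsum_eq_sum_of_fintype]
    simp only [Set.univ_inter]
    exact Finset.sum_coe_sort P Set.ncard
  have sum_ncard_eq : ∑ s ∈ P, s.ncard = ∑ s ∈ P, (s.ncard - 1) + P.card := by
    rw [Finset.card_eq_sum_ones, ← Finset.sum_add_distrib]
    refine Finset.sum_congr rfl fun s hs => (Nat.sub_add_cancel ?_).symm
    exact (Set.ncard_pos s.toFinite).2 (Setoid.nonempty_of_mem_partition hP hs)
  omega

theorem exists_surjective_fin_of_coe_eq_range {X : Type*} {g : W → X} {s : Finset X}
    (hs : (s : Set X) = Set.range g) {n : ℕ} (hn : s.card = n) :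
    ∃ c : W → Fin n, Function.Surjective c ∧ ∀ e f, c e = c f ↔ g e = g f := by
  have mem_s (e : W) : g e ∈ s := Finset.mem_coe.1 (hs ▸ Set.mem_range_self e)
  let q : s ≃ Fin n := s.equivFinOfCardEq hn
  refine ⟨fun e => q ⟨g e, mem_s e⟩, q.surjective.comp ?_, fun e f => by simp⟩
  rintro ⟨x, hx⟩
  obtain ⟨e, rfl⟩ : x ∈ Set.range g := hs ▸ hx
  exact ⟨e, rfl⟩

theorem exists_eq_preimage_singleton {α : Type*} {U : α → Set W}
    (hdisj : Pairwise (Function.onFun Disjoint U)) (hcover : ⋃ k, U k = Set.univ) :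
    ∃ u : W → α, U = fun k => u ⁻¹' {k} := by
  choose u hu using Set.iUnion_eq_univ_iff.1 hcover
  refine ⟨u, funext fun k => Set.ext fun e => ⟨fun he => ?_, ?_⟩⟩
  · exact hdisj.eq (Set.not_disjoint_iff.2 ⟨e, hu e, he⟩)
  · rintro rfl
    exact hu e

end Partition

section SubfileClique

variable {W α : Type*} {L : SimpleGraph W} {u : W → α}

variable (L u) in
/-- The subfile-clique of the vertex `e`: the vertex `e` itself and its neighbors outside its
user-clique. The user-cliques are encoded as the fibers of `u`. -/
def subfileClique (e : W) : Set W :=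
  insert e (L.neighborSet e \ u ⁻¹' {u e})

theorem mem_subfileClique {e f : W} :
    f ∈ subfileClique L u e ↔ f = e ∨ L.Adj e f ∧ u e ≠ u f := by
  simp [subfileClique, eq_comm (a := u e)]

theorem mem_subfileClique_comm {e f : W} :
    f ∈ subfileClique L u e ↔ e ∈ subfileClique L u f := by
  simp only [mem_subfileClique, eq_comm, L.adj_comm, ne_comm]

theorem eq_of_mem_subfileClique_of_eq {e f : W} (hf : f ∈ subfileClique L u e)
    (huef : u e = u f) : e = f :=
  (mem_subfileClique.1 hf).elim Eq.symm fun h => absurd huef h.2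

theorem setOf_subfileClique_eq_range :
    {s | ∃ k, ∃ e ∈ u ⁻¹' {k}, s = insert e (L.neighborSet e \ u ⁻¹' {k})} =
      Set.range (subfileClique L u) := by
  ext s
  simp [subfileClique, eq_comm]

theorem mem_subfileClique_trans
    (hC2 : ∀ e k, u e ≠ k → {f | u f = k ∧ L.Adj e f}.Subsingleton)
    (hC3 : ∀ e, L.IsClique (subfileClique L u e)) {e f g : W}
    (hf : f ∈ subfileClique L u e) (hg : g ∈ subfileClique L u f) :
    g ∈ subfileClique L u e := by
  rcases mem_subfileClique.1 hf with rfl | ⟨hadj_ef, hne_ef⟩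
  · exact hg
  rcases mem_subfileClique.1 hg with rfl | ⟨hadj_fg, -⟩
  · exact hf
  rcases eq_or_ne g e with rfl | hge
  · exact mem_subfileClique.2 (Or.inl rfl)
  have hadj_eg : L.Adj e g := hC3 f (mem_subfileClique_comm.1 hf) hg hge.symm
  have hne_eg : u e ≠ u g := fun hueg =>
    hge (hC2 f (u e) hne_ef.symm ⟨hueg.symm, hadj_fg⟩ ⟨rfl, hadj_ef.symm⟩)
  exact mem_subfileClique.2 (Or.inr ⟨hadj_eg, hne_eg⟩)

theorem mem_subfileClique_iff_eq
    (hC2 : ∀ e k, u e ≠ k → {f | u f = k ∧ L.Adj e f}.Subsingleton)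
    (hC3 : ∀ e, L.IsClique (subfileClique L u e)) (e f : W) :
    f ∈ subfileClique L u e ↔ subfileClique L u e = subfileClique L u f := by
  refine ⟨fun hf => Set.Subset.antisymm ?_ ?_, fun h => h ▸ mem_subfileClique.2 (Or.inl rfl)⟩
  · exact fun _ => mem_subfileClique_trans hC2 hC3 (mem_subfileClique_comm.1 hf)
  · exact fun _ => mem_subfileClique_trans hC2 hC3 hf

theorem adj_iff_ne_and_eq_or_mem_subfileClique (hC1 : ∀ k, L.IsClique (u ⁻¹' {k})) (e f : W) :
    L.Adj e f ↔ e ≠ f ∧ (u e = u f ∨ f ∈ subfileClique L u e) := by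
  rw [mem_subfileClique]
  constructor
  · intro h
    exact ⟨h.ne, (eq_or_ne (u e) (u f)).imp_right fun hu => Or.inr ⟨h, hu⟩⟩
  · rintro ⟨hne, hu | rfl | h⟩
    · exact hC1 (u f) hu rfl hne
    · exact absurd rfl hne
    · exact h.1

end SubfileClique

theorem caching_line_graph_is_lineGraph_of_bipartite_general
    {W α : Type*} [Fintype W] (L : SimpleGraph W) (U : α → Set W)
    (hUclique : ∀ k, L.IsClique (U k))
    (hUdisj : ∀ k₁ k₂, k₁ ≠ k₂ → Disjoint (U k₁) (U k₂))
    (hUcover : (⋃ k, U k) = Set.univ)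
    (hC2 : ∀ k₁ k₂, k₁ ≠ k₂ → ∀ e ∈ U k₁, {f : W | f ∈ U k₂ ∧ L.Adj e f}.Subsingleton)
    (hC3 : ∀ k, ∀ e ∈ U k, L.IsClique (insert e (L.neighborSet e \ U k)))
    (𝒮 : Finset (Set W))
    (h𝒮 : (↑𝒮 : Set (Set W)) =
      {s : Set W | ∃ k, ∃ e ∈ U k, s = insert e (L.neighborSet e \ U k)}) :
    ∃ B : SimpleGraph (α ⊕ Fin (Fintype.card W - ∑ s ∈ 𝒮, (s.ncard - 1))),
      (∀ a b, ¬ B.Adj (Sum.inl a) (Sum.inl b)) ∧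
      (∀ a b, ¬ B.Adj (Sum.inr a) (Sum.inr b)) ∧
      (∀ k, (B.neighborSet (Sum.inl k)).ncard = (U k).ncard) ∧
      (∀ f, (B.neighborSet (Sum.inr f)).Nonempty) ∧
      Nonempty (L ≃g B.lineGraph) := by
  obtain ⟨u, rfl⟩ := exists_eq_preimage_singleton (fun _ _ => hUdisj _ _) hUcover
  have mem_iff_eq := mem_subfileClique_iff_eq (L := L) (u := u)
    (fun e k hk => hC2 (u e) k hk e rfl) (fun e => hC3 (u e) e rfl)
  rw [setOf_subfileClique_eq_range] at h𝒮
  have card_𝒮 := card_eq_card_sub_sum_of_isPartition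
    (h𝒮 ▸ isPartition_range_of_mem_iff_eq mem_iff_eq)
  obtain ⟨c, c_surjective, c_eq_iff⟩ := exists_surjective_fin_of_coe_eq_range h𝒮 card_𝒮
  have c_eq_iff_mem (e f : W) : c e = c f ↔ f ∈ subfileClique L u e :=
    (c_eq_iff e f).trans (mem_iff_eq e f).symm
  have ends_injective (e f : W) (hu : u e = u f) (hc : c e = c f) : e = f :=
    eq_of_mem_subfileClique_of_eq ((c_eq_iff_mem e f).1 hc) hu
  refine ⟨bipartiteGraphOfEnds u c, bipartiteGraphOfEnds_not_adj_inl_inl u c,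
    bipartiteGraphOfEnds_not_adj_inr_inr u c,
    ncard_neighborSet_inl_bipartiteGraphOfEnds ends_injective,
    nonempty_neighborSet_inr_bipartiteGraphOfEnds c_surjective,
    nonempty_iso_lineGraph_bipartiteGraphOfEnds ends_injective fun e f => ?_⟩
  rw [c_eq_iff_mem, adj_iff_ne_and_eq_or_mem_subfileClique hUclique]

/-- a graph on `K*D` vertices satisfying (C1)-(C3) is the line graph of a
`D`-left-regular bipartite graph with `K` left vertices and
`F = K*D - ∑ᵢ (|Sᵢ| - 1)` right vertices, each right vertex having at least one neighbor. -/
theorem caching_line_graph_is_lineGraph_of_bipartite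
    {W : Type*} [Fintype W] (K D : ℕ) (hK : 1 ≤ K) (hD : 1 ≤ D)
    (hcard : Fintype.card W = K * D)
    (L : SimpleGraph W) (U : Fin K → Set W)
    -- (C1)
    (hUclique : ∀ k : Fin K, L.IsClique (U k))
    (hUcard : ∀ k : Fin K, (U k).ncard = D)
    (hUdisj : ∀ k₁ k₂ : Fin K, k₁ ≠ k₂ → Disjoint (U k₁) (U k₂))
    (hUcover : (⋃ k : Fin K, U k) = Set.univ)
    -- (C2)
    (hC2 : ∀ k₁ k₂ : Fin K, k₁ ≠ k₂ → ∀ e ∈ U k₁,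
      {f : W | f ∈ U k₂ ∧ L.Adj e f}.Subsingleton)
    -- (C3)
    (hC3 : ∀ k : Fin K, ∀ e ∈ U k, L.IsClique (insert e (L.neighborSet e \ U k)))
    -- the subfile-cliques
    (𝒮 : Finset (Set W))
    (h𝒮 : (↑𝒮 : Set (Set W)) =
      {s : Set W | ∃ k : Fin K, ∃ e ∈ U k, s = insert e (L.neighborSet e \ U k)}) :
    ∃ B : SimpleGraph (Fin K ⊕ Fin (K * D - ∑ s ∈ 𝒮, (s.ncard - 1))),
      (∀ a b : Fin K, ¬ B.Adj (Sum.inl a) (Sum.inl b)) ∧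
      (∀ a b : Fin (K * D - ∑ s ∈ 𝒮, (s.ncard - 1)), ¬ B.Adj (Sum.inr a) (Sum.inr b)) ∧
      (∀ k : Fin K, (B.neighborSet (Sum.inl k)).ncard = D) ∧
      (∀ f : Fin (K * D - ∑ s ∈ 𝒮, (s.ncard - 1)), (B.neighborSet (Sum.inr f)).Nonempty) ∧
      Nonempty (L ≃g B.lineGraph) := by
  rw [← hcard]
  simpa only [hUcard] using caching_line_graph_is_lineGraph_of_bipartite_general
    L U hUclique hUdisj hUcover hC2 hC3 𝒮 h𝒮
end

section
/- Let q be a prime power, m, t ≥ 1, and let X be an (m+t)-dimensional vector space over F_q. Then there exists a bijection σ from the set of t-dimensional subspaces of X onto the set of m-dimensional subspaces of X such that V ⊕ σ(V) = X for every t-dimensional subspace V of X. -/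
/-!
Join a `t`-dimensional subspace to an `m`-dimensional one when they are complementary. Having fixed
one complement `W` of `V`, the complements of `V` are the graphs of the linear maps `W → V`, so both
sides of this bipartite graph are regular of the same degree `q ^ (m * t)`. In a regular bipartite
graph Hall's condition holds by double counting, and this gives an injective matching in each
direction; a Schröder–Bernstein argument merges the two into a perfect matching.
-/

theorem encard_eq_of_ncard_eq {α : Type*} {s : Set α} {d : ℕ} (hd : d ≠ 0) (hs : s.ncard = d) :
    s.encard = d := by
  rw [← hs, (Set.finite_of_ncard_ne_zero (hs ▸ hd)).cast_ncard_eq]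

section BiregularRelation

variable {α β : Type*} {r : α → β → Prop} {d : ℕ}

theorem exists_injective_forall_rel_of_le_encard_of_encard_le (hd : d ≠ 0)
    (hα : ∀ a, d ≤ {b | r a b}.encard) (hβ : ∀ b, {a | r a b}.encard ≤ d) :
    ∃ f : α → β, Function.Injective f ∧ ∀ a, r a (f a) := by
  classical
  have exists_finset (a : α) : ∃ u : Finset β, (∀ b ∈ u, r a b) ∧ u.card = d := by
    obtain ⟨u, hur, hud⟩ := Set.exists_subset_encard_eq (hα a)
    lift u to Finset β using Set.finite_of_encard_eq_coe hud
    exact ⟨u, hur, by simpa using hud⟩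
  choose N hNr hNd using exists_finset
  have hall (s : Finset α) : s.card ≤ (s.biUnion N).card := by
    refine Nat.le_of_mul_le_mul_right ?_ (Nat.pos_of_ne_zero hd)
    refine Finset.card_mul_le_card_mul (fun a b ↦ b ∈ N a) (fun a ha ↦ ?_) (fun b _ ↦ ?_)
    · refine (hNd a).ge.trans (Finset.card_le_card fun b hb ↦ ?_)
      exact Finset.mem_bipartiteAbove _ |>.2 ⟨Finset.mem_biUnion.2 ⟨a, ha, hb⟩, hb⟩
    · rw [← Nat.cast_le (α := ℕ∞), ← Set.encard_coe_eq_coe_finsetCard]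
      refine (Set.encard_le_encard fun a ha ↦ ?_).trans (hβ b)
      exact hNr a b (Finset.mem_bipartiteBelow _ |>.1 ha).2
  obtain ⟨f, hf, hfN⟩ := (Finset.all_card_le_biUnion_card_iff_exists_injective N).1 hall
  exact ⟨f, hf, fun a ↦ hNr a _ (hfN a)⟩

theorem exists_equiv_forall_rel_of_ncard_eq (hd : d ≠ 0)
    (hα : ∀ a, {b | r a b}.ncard = d) (hβ : ∀ b, {a | r a b}.ncard = d) :
    ∃ σ : α ≃ β, ∀ a, r a (σ a) := by
  obtain ⟨f, hf, hfr⟩ := exists_injective_forall_rel_of_le_encard_of_encard_le hd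
    (fun a ↦ (encard_eq_of_ncard_eq hd (hα a)).ge) (fun b ↦ (encard_eq_of_ncard_eq hd (hβ b)).le)
  obtain ⟨g, hg, hgr⟩ := exists_injective_forall_rel_of_le_encard_of_encard_le
    (r := fun b a ↦ r a b) hd (fun b ↦ (encard_eq_of_ncard_eq hd (hβ b)).ge)
    (fun a ↦ (encard_eq_of_ncard_eq hd (hα a)).le)
  obtain ⟨h, hh, hr⟩ := Function.Embedding.schroeder_bernstein_of_rel hf hg r hfr hgr
  exact ⟨Equiv.ofBijective h hh, hr⟩

end BiregularRelation

section Complements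

/-- The complements of a submodule `p` are parametrized by the linear maps `q → p` out of one
complement `q`: the complement `q'` corresponds to the projection onto `p` along `q'`, restricted
to `q`. -/
noncomputable def isComplEquivLinearMap {R E : Type*} [Ring R] [AddCommGroup E] [Module R E]
    {p q : Submodule R E} (h : IsCompl p q) : {q' // IsCompl p q'} ≃ (q →ₗ[R] p) :=
  p.isComplEquivProj.trans
    { toFun := fun f ↦ f.1.domRestrict q
      invFun := fun g ↦ ⟨LinearMap.ofIsCompl h LinearMap.id g, LinearMap.ofIsCompl_apply_left h⟩
      left_inv := fun f ↦ Subtype.ext (LinearMap.ofIsCompl_eq h (fun x ↦ (f.2 x).symm) fun _ ↦ rfl)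
      right_inv := fun _ ↦ LinearMap.ext fun x ↦ LinearMap.ofIsCompl_apply_right h x }

variable {K E : Type*} [Field K] [AddCommGroup E] [Module K E] [FiniteDimensional K E]

theorem ncard_setOf_isCompl {p q : Submodule K E} (h : IsCompl p q) :
    {q' | IsCompl p q'}.ncard = Nat.card K ^ (Module.finrank K p * Module.finrank K q) :=
  calc
    {q' | IsCompl p q'}.ncard = Nat.card (q →ₗ[K] p) := Nat.card_congr (isComplEquivLinearMap h)
    _ = Nat.card K ^ (Module.finrank K p * Module.finrank K q) := by
      rw [Module.natCard_eq_pow_finrank (K := K), Module.finrank_linearMap, mul_comm]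

theorem ncard_setOf_isCompl_of_finrank {k l : ℕ} (hE : Module.finrank K E = k + l)
    {p : Submodule K E} (hp : Module.finrank K p = k) :
    {q : {q : Submodule K E // Module.finrank K q = l} | IsCompl p q}.ncard =
      Nat.card K ^ (k * l) := by
  have finrank_compl {q : Submodule K E} (h : IsCompl p q) : Module.finrank K q = l := by
    have := Submodule.finrank_add_eq_of_isCompl h
    omega
  obtain ⟨q, hpq⟩ := p.exists_isCompl
  rw [← hp, ← finrank_compl hpq, ← ncard_setOf_isCompl hpq]
  refine Set.ncard_preimage_of_injective_subset_range Subtype.val_injective fun q' hq' ↦ ?_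
  exact ⟨⟨q', (finrank_compl hq').trans (finrank_compl hpq).symm⟩, rfl⟩

end Complements

/-- for an `(m+t)`-dimensional space `X` over a finite field, there is a
bijection `σ` from the `t`-dimensional subspaces of `X` onto the `m`-dimensional subspaces
of `X` such that `V ⊕ σ(V) = X` for every `t`-dimensional subspace `V`. -/
theorem exists_matching_complement_bijection
    (Fq : Type*) [Field Fq] [Fintype Fq]
    (X : Type*) [AddCommGroup X] [Module Fq X] [FiniteDimensional Fq X]
    (m t : ℕ) (hm : 1 ≤ m) (ht : 1 ≤ t) (hX : Module.finrank Fq X = m + t) :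
    ∃ σ : {V : Submodule Fq X // Module.finrank Fq V = t} ≃
          {T : Submodule Fq X // Module.finrank Fq T = m},
      ∀ V : {V : Submodule Fq X // Module.finrank Fq V = t},
        (V : Submodule Fq X) ⊓ (σ V : Submodule Fq X) = ⊥ ∧
        (V : Submodule Fq X) ⊔ (σ V : Submodule Fq X) = ⊤ := by
  have card_compl_V (V : {V : Submodule Fq X // Module.finrank Fq V = t}) :
      {T : {T : Submodule Fq X // Module.finrank Fq T = m} | IsCompl V.1 T.1}.ncard =
        Nat.card Fq ^ (t * m) :=
    ncard_setOf_isCompl_of_finrank (hX.trans (add_comm m t)) V.2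
  have card_compl_T (T : {T : Submodule Fq X // Module.finrank Fq T = m}) :
      {V : {V : Submodule Fq X // Module.finrank Fq V = t} | IsCompl V.1 T.1}.ncard =
        Nat.card Fq ^ (t * m) := by
    simpa only [isCompl_comm, mul_comm] using ncard_setOf_isCompl_of_finrank hX T.2
  obtain ⟨σ, hσ⟩ := exists_equiv_forall_rel_of_ncard_eq (pow_ne_zero _ Nat.card_pos.ne')
    card_compl_V card_compl_T
  exact ⟨σ, fun V ↦ ⟨(hσ V).inf_eq_bot, (hσ V).sup_eq_top⟩⟩
end

section
/- Let q ≥ 2 be a prime power and a, b, f integers with 1 ≤ b ≤ f ≤ a. Then q^{(a−f−1)b} ≤ [a choose b]_q / [f choose b]_q ≤ q^{(a−f+1)b}. -/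
/-- The Gaussian binomial coefficient `[a choose b]_q`, as a rational number:
`∏_{i=0}^{b-1} (q^{a-i} - 1)/(q^{b-i} - 1)`. -/
def gaussBinomQ (q a b : ℕ) : ℚ :=
  ∏ i ∈ Finset.range b, (((q : ℚ) ^ (a - i) - 1) / ((q : ℚ) ^ (b - i) - 1))

/-! Since `q ^ (n - 1) ≤ q ^ n - 1 ≤ q ^ n` for `q ≥ 2` and `n ≥ 1`, each of the `b` numerators of
`[a choose b]_q` is at most `q ^ (a - f + 1)` times the corresponding one of `[f choose b]_q`. This
holds whichever of `a` and `f` is larger, and exchanging them turns the upper bound for the ratio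
into the lower bound. -/

lemma pow_le_pow_succ_sub_one {R : Type*} [Ring R] [PartialOrder R] [IsOrderedRing R] {x : R}
    (hx : 2 ≤ x) (n : ℕ) : x ^ n ≤ x ^ (n + 1) - 1 := by
  have one_le : 1 ≤ x ^ n := one_le_pow₀ (one_le_two.trans hx)
  rw [le_sub_iff_add_le]
  calc x ^ n + 1 ≤ x ^ n + x ^ n := by gcongr
    _ = x ^ n * 2 := (mul_two _).symm
    _ ≤ x ^ n * x := mul_le_mul_of_nonneg_left hx (zero_le_one.trans one_le)
    _ = x ^ (n + 1) := (pow_succ x n).symm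

lemma pow_sub_one_le_zpow_mul_pow_sub_one {K : Type*} [Field K] [LinearOrder K]
    [IsStrictOrderedRing K] {x : K} (hx : 2 ≤ x) (m : ℕ) {n : ℕ} (hn : n ≠ 0) :
    x ^ m - 1 ≤ x ^ ((m : ℤ) - n + 1) * (x ^ n - 1) := by
  have x_pos : 0 < x := two_pos.trans_le hx
  obtain ⟨k, rfl⟩ := Nat.exists_eq_succ_of_ne_zero hn
  calc x ^ m - 1 ≤ x ^ m := sub_le_self _ zero_le_one
    _ = x ^ ((m : ℤ) - (k + 1 : ℕ) + 1) * x ^ k := by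
      rw [← zpow_natCast, ← zpow_natCast, ← zpow_add₀ x_pos.ne']
      congr 1
      lia
    _ ≤ x ^ ((m : ℤ) - (k + 1 : ℕ) + 1) * (x ^ (k + 1) - 1) := by
      gcongr
      exact pow_le_pow_succ_sub_one hx k

lemma gaussBinomQ_pos {q a b : ℕ} (hq : 1 < q) (hba : b ≤ a) : 0 < gaussBinomQ q a b := by
  have pow_sub_one_pos {n : ℕ} (hn : n ≠ 0) : (0 : ℚ) < (q : ℚ) ^ n - 1 :=
    sub_pos.2 (one_lt_pow₀ (Nat.one_lt_cast.2 hq) hn)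
  refine Finset.prod_pos fun i hi ↦ ?_
  have hib : i < b := Finset.mem_range.1 hi
  exact div_pos (pow_sub_one_pos (by lia)) (pow_sub_one_pos (by lia))

lemma gaussBinomQ_le_zpow_mul_gaussBinomQ {q a b f : ℕ} (hq : 2 ≤ q) (hba : b ≤ a) (hbf : b ≤ f) :
    gaussBinomQ q a b ≤ (q : ℚ) ^ (((a : ℤ) - f + 1) * b) * gaussBinomQ q f b := by
  have one_le_q : (1 : ℚ) ≤ q := Nat.one_le_cast.2 (by lia)
  have pow_sub_one_nonneg (n : ℕ) : (0 : ℚ) ≤ (q : ℚ) ^ n - 1 :=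
    sub_nonneg.2 (one_le_pow₀ one_le_q)
  have zpow_eq_prod : (q : ℚ) ^ (((a : ℤ) - f + 1) * b) =
      ∏ _i ∈ Finset.range b, (q : ℚ) ^ ((a : ℤ) - f + 1) := by
    rw [Finset.prod_const, Finset.card_range, zpow_mul, zpow_natCast]
  rw [zpow_eq_prod, gaussBinomQ, gaussBinomQ, ← Finset.prod_mul_distrib]
  refine Finset.prod_le_prod
    (fun i _ ↦ div_nonneg (pow_sub_one_nonneg _) (pow_sub_one_nonneg _)) fun i hi ↦ ?_
  have hib : i < b := Finset.mem_range.1 hi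
  have exponent_eq : ((a - i : ℕ) : ℤ) - (f - i : ℕ) + 1 = a - f + 1 := by lia
  rw [← mul_div_assoc, ← exponent_eq]
  exact div_le_div_of_nonneg_right
    (pow_sub_one_le_zpow_mul_pow_sub_one (Nat.ofNat_le_cast.2 hq) (a - i) (by lia))
    (pow_sub_one_nonneg _)

lemma gaussBinomQ_div_gaussBinomQ_le_zpow {q a b f : ℕ} (hq : 2 ≤ q) (hba : b ≤ a) (hbf : b ≤ f) :
    gaussBinomQ q a b / gaussBinomQ q f b ≤ (q : ℚ) ^ (((a : ℤ) - f + 1) * b) :=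
  (div_le_iff₀ (gaussBinomQ_pos hq hbf)).2 (gaussBinomQ_le_zpow_mul_gaussBinomQ hq hba hbf)

lemma zpow_le_gaussBinomQ_div_gaussBinomQ {q a b f : ℕ} (hq : 2 ≤ q) (hba : b ≤ a) (hbf : b ≤ f) :
    (q : ℚ) ^ (((a : ℤ) - f - 1) * b) ≤ gaussBinomQ q a b / gaussBinomQ q f b := by
  have ratio_pos : 0 < gaussBinomQ q f b / gaussBinomQ q a b :=
    div_pos (gaussBinomQ_pos hq hbf) (gaussBinomQ_pos hq hba)
  calc (q : ℚ) ^ (((a : ℤ) - f - 1) * b)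
      = ((q : ℚ) ^ (((f : ℤ) - a + 1) * b))⁻¹ := by rw [← zpow_neg]; congr 1; ring
    _ ≤ (gaussBinomQ q f b / gaussBinomQ q a b)⁻¹ :=
      inv_anti₀ ratio_pos (gaussBinomQ_div_gaussBinomQ_le_zpow hq hbf hba)
    _ = gaussBinomQ q a b / gaussBinomQ q f b := inv_div _ _

theorem gauss_binomial_ratio_bounds_general {q a b f : ℕ} (hq : 2 ≤ q) (hba : b ≤ a)
    (hbf : b ≤ f) :
    (q : ℚ) ^ (((a : ℤ) - f - 1) * b) ≤ gaussBinomQ q a b / gaussBinomQ q f b ∧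
      gaussBinomQ q a b / gaussBinomQ q f b ≤ (q : ℚ) ^ (((a : ℤ) - f + 1) * b) :=
  ⟨zpow_le_gaussBinomQ_div_gaussBinomQ hq hba hbf, gaussBinomQ_div_gaussBinomQ_le_zpow hq hba hbf⟩

/-- for a prime power `q ≥ 2` and `1 ≤ b ≤ f ≤ a`,
`q^{(a−f−1)b} ≤ [a choose b]_q / [f choose b]_q ≤ q^{(a−f+1)b}`. -/
theorem gauss_binomial_ratio_bounds (q a b f : ℕ) (hq2 : 2 ≤ q) (hq : IsPrimePow q)
    (hb : 1 ≤ b) (hbf : b ≤ f) (hfa : f ≤ a) :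
    (q : ℚ) ^ ((((a : ℤ) - f) - 1) * b) ≤ gaussBinomQ q a b / gaussBinomQ q f b ∧
      gaussBinomQ q a b / gaussBinomQ q f b ≤ (q : ℚ) ^ ((((a : ℤ) - f) + 1) * b) :=
  gauss_binomial_ratio_bounds_general hq2 (hbf.trans hfa) hbf
end
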